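/- arXiv:1101.5470 — 4 statements merged into one kernel-verified Lean document; each statement's English description precedes it below -/
import Mathlib

section
/- Let A₁, A₂ be two-dimensional vector spaces over the field 𝔽₂ with two elements, and let B be a linear subspace of A₁ ⊕ A₂ such that for any b₁, b₂ ∈ B, the number of indices i ∈ {1,2} such that the canonical projection of the span of {b₁, b₂} onto A_i is surjective is even. Then one of the following holds: (1) there exist nonzero elements a₁ ∈ A₁ and a₂ ∈ A₂ such that B is contained in 𝔽₂a₁ ⊕ 𝔽₂a₂; (2) there exists a linear isomorphism f : A₁ → A₂ such that B = {a + f(a) : a ∈ A₁}. -/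
theorem aux_even (P : Fin 2 → Prop) (h : Even (Nat.card {i : Fin 2 // P i})) : P 0 ↔ P 1 := by
  classical
  rw [Nat.card_eq_fintype_card, Fintype.card_subtype, Finset.card_filter, Fin.sum_univ_two] at h
  by_cases h0 : P 0 <;> by_cases h1 : P 1 <;> simp [h0, h1] at h ⊢

theorem aux_line {V : Type*} [AddCommGroup V] [Module (ZMod 2) V]
    (hd : Module.finrank (ZMod 2) V = 2) (a x : V) (ha : a ≠ 0)
    (h : Submodule.span (ZMod 2) {a, x} ≠ ⊤) : ∃ c : ZMod 2, x = c • a := by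
  by_contra hc
  push Not at hc
  apply h
  have hli : LinearIndependent (ZMod 2) ![a, x] :=
    (LinearIndependent.pair_iff' ha).2 fun c hcx => hc c hcx.symm
  have := hli.span_eq_top_of_card_eq_finrank (by simp [hd])
  simpa [Set.pair_comm] using this

theorem aux_zero {V : Type*} [AddCommGroup V] [Module (ZMod 2) V]
    (hd : Module.finrank (ZMod 2) V = 2) (a : V) : 
    Submodule.span (ZMod 2) {0, a} ≠ ⊤ := by
  intro h
  rw [Submodule.span_insert_zero] at h
  have h1 := finrank_span_le_card (R := ZMod 2) ({a} : Set V)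
  rw [h, finrank_top, hd] at h1
  simp at h1

theorem aux_z2 (c : ZMod 2) : c = 0 ∨ c = 1 := by
  revert c; decide

theorem aux_inj {A : Fin 2 → Type*} [∀ i, AddCommGroup (A i)] [∀ i, Module (ZMod 2) (A i)]
    (hdim : ∀ i, Module.finrank (ZMod 2) (A i) = 2)
    (B : Submodule (ZMod 2) (∀ i, A i)) (i j : Fin 2)
    (hB : ∀ b₁ ∈ B, ∀ b₂ ∈ B, Submodule.span (ZMod 2) {b₁ i, b₂ i} = ⊤ ↔
      Submodule.span (ZMod 2) {b₁ j, b₂ j} = ⊤)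
    (b₁ b₂ : ∀ i, A i) (h₁ : b₁ ∈ B) (h₂ : b₂ ∈ B)
    (h : Submodule.span (ZMod 2) {b₁ i, b₂ i} = ⊤)
    (x : ∀ i, A i) (hx : x ∈ B) (hxi : x i = 0) : x j = 0 := by
  have hj := (hB b₁ h₁ b₂ h₂).1 h
  have hm : x j ∈ Submodule.span (ZMod 2) {b₁ j, b₂ j} := by rw [hj]; trivial
  obtain ⟨c, d, hcd⟩ := Submodule.mem_span_pair.1 hm
  have key : ∀ z ∈ B, ∀ w ∈ B, z j = 0 → Submodule.span (ZMod 2) {z i, w i} ≠ ⊤ := by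
    intro z hz w hw hzj ht
    have := (hB z hz w hw).1 ht
    rw [hzj] at this
    exact aux_zero (hdim j) _ this
  have hz : c • b₁ + d • b₂ - x ∈ B :=
    B.sub_mem (B.add_mem (B.smul_mem _ h₁) (B.smul_mem _ h₂)) hx
  have hzj : (c • b₁ + d • b₂ - x) j = 0 := by simp [hcd]
  have hzi : (c • b₁ + d • b₂ - x) i = c • b₁ i + d • b₂ i := by simp [hxi]
  have k1 := key _ hz b₁ h₁ hzj
  have k2 := key _ hz b₂ h₂ hzj
  rw [hzi] at k1 k2
  rcases aux_z2 c with rfl | rfl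
  · rcases aux_z2 d with rfl | rfl
    · simpa using hcd.symm
    · exact absurd (by simpa [Set.pair_comm] using h) k1
  · refine absurd ?_ k2
    rw [eq_top_iff, ← h, Submodule.span_le]
    rintro y (rfl | rfl)
    · exact Submodule.mem_span_pair.2 ⟨1, -d, by rw [one_smul, one_smul, neg_smul, add_neg_cancel_right]⟩
    · exact Submodule.subset_span (by simp)

theorem aux_case {A : Fin 2 → Type*} [∀ i, AddCommGroup (A i)] [∀ i, Module (ZMod 2) (A i)]
    (hdim : ∀ i, Module.finrank (ZMod 2) (A i) = 2)
    (B : Submodule (ZMod 2) (∀ i, A i)) (i : Fin 2)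
    (h : ∀ b₁ ∈ B, ∀ b₂ ∈ B, Submodule.span (ZMod 2) {b₁ i, b₂ i} ≠ ⊤) :
    ∃ a : A i, a ≠ 0 ∧ ∀ x ∈ B, ∃ c : ZMod 2, x i = c • a := by
  by_cases hz : ∀ x ∈ B, x i = 0
  · have : Nontrivial (A i) := Module.nontrivial_of_finrank_pos (R := ZMod 2) (by rw [hdim]; norm_num)
    obtain ⟨a, ha⟩ := exists_ne (0 : A i)
    exact ⟨a, ha, fun x hx => ⟨0, by simp [hz x hx]⟩⟩
  · push Not at hz
    obtain ⟨b, hb, hbi⟩ := hz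
    exact ⟨b i, hbi, fun x hx => aux_line (hdim i) _ _ hbi (h b hb x hx)⟩

theorem aux_surj {A : Fin 2 → Type*} [∀ i, AddCommGroup (A i)] [∀ i, Module (ZMod 2) (A i)]
    (B : Submodule (ZMod 2) (∀ i, A i)) (i : Fin 2)
    (b₁ b₂ : ∀ i, A i) (h₁ : b₁ ∈ B) (h₂ : b₂ ∈ B)
    (h : Submodule.span (ZMod 2) {b₁ i, b₂ i} = ⊤) (y : A i) : ∃ x ∈ B, x i = y := by
  have hm : y ∈ Submodule.span (ZMod 2) {b₁ i, b₂ i} := by rw [h]; trivial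
  obtain ⟨c, d, hcd⟩ := Submodule.mem_span_pair.1 hm
  exact ⟨c • b₁ + d • b₂, B.add_mem (B.smul_mem _ h₁) (B.smul_mem _ h₂), by simpa using hcd⟩

/-- Lemma on subspaces of `A₁ ⊕ A₂` over `𝔽₂` such that for any two
elements, the number of coordinates onto which the projection of their span is
surjective is even. -/
theorem stmt_1 {A : Fin 2 → Type*} [∀ i, AddCommGroup (A i)] [∀ i, Module (ZMod 2) (A i)]
    (hdim : ∀ i, Module.finrank (ZMod 2) (A i) = 2)
    (B : Submodule (ZMod 2) (∀ i, A i))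
    (hB : ∀ b₁ ∈ B, ∀ b₂ ∈ B, Even (Nat.card {i : Fin 2 //
      Submodule.map (LinearMap.proj i) (Submodule.span (ZMod 2) {b₁, b₂}) = ⊤})) :
    (∃ a₁ : A 0, a₁ ≠ 0 ∧ ∃ a₂ : A 1, a₂ ≠ 0 ∧
      ∀ x ∈ B, (∃ c : ZMod 2, x 0 = c • a₁) ∧ (∃ c : ZMod 2, x 1 = c • a₂)) ∨
    (∃ f : A 0 ≃ₗ[ZMod 2] A 1, ∀ x : ∀ i, A i, x ∈ B ↔ x 1 = f (x 0)) := by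
  have hB' : ∀ b₁ ∈ B, ∀ b₂ ∈ B, Submodule.span (ZMod 2) {b₁ 0, b₂ 0} = ⊤ ↔
      Submodule.span (ZMod 2) {b₁ 1, b₂ 1} = ⊤ := by
    intro b₁ h₁ b₂ h₂
    have := aux_even _ (hB b₁ h₁ b₂ h₂)
    simpa only [Submodule.map_span, Set.image_pair, LinearMap.proj_apply] using this
  by_cases hc : ∀ b₁ ∈ B, ∀ b₂ ∈ B, Submodule.span (ZMod 2) {b₁ 0, b₂ 0} ≠ ⊤
  · left
    obtain ⟨a₁, ha₁, h1⟩ := aux_case hdim B 0 hc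
    obtain ⟨a₂, ha₂, h2⟩ := aux_case hdim B 1
      (fun b₁ h₁ b₂ h₂ h => hc b₁ h₁ b₂ h₂ ((hB' b₁ h₁ b₂ h₂).2 h))
    exact ⟨a₁, ha₁, a₂, ha₂, fun x hx => ⟨h1 x hx, h2 x hx⟩⟩
  · right
    push Not at hc
    obtain ⟨b₁, h₁, b₂, h₂, h⟩ := hc
    have h' := (hB' b₁ h₁ b₂ h₂).1 h
    have i01 := aux_inj hdim B 0 1 hB' b₁ b₂ h₁ h₂ h
    have i10 := aux_inj hdim B 1 0 (fun a ha b hb => (hB' a ha b hb).symm) b₁ b₂ h₁ h₂ h'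
    have s0 := aux_surj B 0 b₁ b₂ h₁ h₂ h
    have s1 := aux_surj B 1 b₁ b₂ h₁ h₂ h'
    have hext : ∀ x ∈ B, x 0 = 0 → x 1 = 0 → x = 0 := by
      intro x _ h0 h1
      funext i
      fin_cases i
      · exact h0
      · exact h1
    let p : ∀ i, B →ₗ[ZMod 2] A i := fun i => (LinearMap.proj i).comp B.subtype
    have bij0 : Function.Bijective (p 0) := by
      refine ⟨(injective_iff_map_eq_zero _).2 ?_, fun y => ?_⟩
      · rintro ⟨x, hx⟩ h0
        exact Subtype.ext (hext x hx h0 (i01 x hx h0))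
      · obtain ⟨x, hx, e⟩ := s0 y
        exact ⟨⟨x, hx⟩, e⟩
    have bij1 : Function.Bijective (p 1) := by
      refine ⟨(injective_iff_map_eq_zero _).2 ?_, fun y => ?_⟩
      · rintro ⟨x, hx⟩ h0
        exact Subtype.ext (hext x hx (i10 x hx h0) h0)
      · obtain ⟨x, hx, e⟩ := s1 y
        exact ⟨⟨x, hx⟩, e⟩
    let e0 := LinearEquiv.ofBijective (p 0) bij0
    let e1 := LinearEquiv.ofBijective (p 1) bij1
    have hf : ∀ x (hx : x ∈ B), (e0.symm.trans e1) (x 0) = x 1 := by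
      intro x hx
      have : e0.symm (x 0) = ⟨x, hx⟩ := by
        rw [LinearEquiv.symm_apply_eq]
        rfl
      rw [LinearEquiv.trans_apply, this]
      rfl
    refine ⟨e0.symm.trans e1, fun x => ⟨fun hx => (hf x hx).symm, fun hx => ?_⟩⟩
    obtain ⟨y, hy, hy0⟩ := s0 (x 0)
    have hy1 := hf y hy
    rw [hy0, ← hx] at hy1
    have : x = y := by
      funext i
      fin_cases i
      · exact hy0.symm
      · exact hy1
    rw [this]
    exact hy
end

section
/- Let F be an algebraically closed field of characteristic 0 and fix i ∈ F with i² = −1. If A and B are matrices in SL₂(F) satisfying A⁴ = I, B⁴ = I, and AB = −BA, then there exists P ∈ SL₂(F) such that P A P⁻¹ = [[i, 0], [0, −i]] and P B P⁻¹ = [[0, −1], [1, 0]]. -/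
theorem aux_trace {F : Type*} [Field F] [CharZero F]
    (A B : Matrix (Fin 2) (Fin 2) F) (hB : B.det = 1) (h : A * B = -(B * A)) :
    A.trace = 0 := by
  have h1 : A = -(B * A * B.adjugate) := by
    calc A = A * (B * B.adjugate) := by rw [Matrix.mul_adjugate, hB]; simp
      _ = A * B * B.adjugate := by rw [Matrix.mul_assoc]
      _ = _ := by rw [h, Matrix.neg_mul]
  have h2 : (B * A * B.adjugate).trace = A.trace := by
    rw [Matrix.mul_assoc, Matrix.trace_mul_comm, Matrix.mul_assoc, Matrix.adjugate_mul, hB]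
    simp
  have h3 : A.trace = -A.trace := by
    conv_lhs => rw [h1, Matrix.trace_neg, h2]
  exact self_eq_neg.mp h3

/-- if `A, B ∈ SL₂(F)` satisfy `A⁴ = B⁴ = I` and `AB = -BA`, then they
can be simultaneously conjugated inside `SL₂(F)` to `[[i,0],[0,-i]]` and
`[[0,-1],[1,0]]`, where `i² = -1`. -/
theorem stmt_8 {F : Type*} [Field F] [IsAlgClosed F] [CharZero F]
    (i : F) (hi : i ^ 2 = -1)
    (A B : Matrix.SpecialLinearGroup (Fin 2) F)
    (hA : A ^ 4 = 1) (hB : B ^ 4 = 1)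
    (hAB : ((A * B : Matrix.SpecialLinearGroup (Fin 2) F) : Matrix (Fin 2) (Fin 2) F) =
      -((B * A : Matrix.SpecialLinearGroup (Fin 2) F) : Matrix (Fin 2) (Fin 2) F)) :
    ∃ P : Matrix.SpecialLinearGroup (Fin 2) F,
      ((P * A * P⁻¹ : Matrix.SpecialLinearGroup (Fin 2) F) : Matrix (Fin 2) (Fin 2) F) =
        !![i, 0; 0, -i] ∧
      ((P * B * P⁻¹ : Matrix.SpecialLinearGroup (Fin 2) F) : Matrix (Fin 2) (Fin 2) F) =
        !![0, -1; 1, 0] := by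
  have hdA := A.det_coe
  have hdB := B.det_coe
  rw [Matrix.SpecialLinearGroup.coe_mul, Matrix.SpecialLinearGroup.coe_mul] at hAB
  have htA := aux_trace _ _ hdB hAB
  have htB := aux_trace (B : Matrix (Fin 2) (Fin 2) F) A hdA (by rw [hAB, neg_neg])
  obtain ⟨a, b, c, p, q, r, ea, eb, ec, ed, ep, eq, er, es⟩ :
      ∃ a b c p q r : F, A.1 0 0 = a ∧ A.1 0 1 = b ∧ A.1 1 0 = c ∧ A.1 1 1 = -a ∧
        B.1 0 0 = p ∧ B.1 0 1 = q ∧ B.1 1 0 = r ∧ B.1 1 1 = -p := by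
    rw [Matrix.trace_fin_two] at htA htB
    exact ⟨_, _, _, _, _, _, rfl, rfl, rfl, by linear_combination htA,
      rfl, rfl, rfl, by linear_combination htB⟩
  have hA' : A.1 = !![a, b; c, -a] := by
    rw [← ed, ← ea, ← eb, ← ec]; exact Matrix.eta_fin_two _
  have hB' : B.1 = !![p, q; r, -p] := by
    rw [← es, ← ep, ← eq, ← er]; exact Matrix.eta_fin_two _
  rw [hA', Matrix.det_fin_two_of] at hdA
  rw [hB', Matrix.det_fin_two_of] at hdB
  rw [hA', hB'] at hAB
  have k := congrFun (congrFun hAB 0) 0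
  simp [Matrix.mul_apply, Fin.sum_univ_two] at k
  have i0 : i ≠ 0 := by rintro rfl; norm_num at hi
  obtain ⟨x, y, hxy, e1, e2⟩ : ∃ x y : F, ¬ (x = 0 ∧ y = 0) ∧
      a * x + b * y = i * x ∧ c * x - a * y = i * y := by
    by_cases h : a + i = 0 ∧ c = 0
    · refine ⟨b, i - a, ?_, by ring, by linear_combination -hi - hdA⟩
      rintro ⟨_, h2⟩
      apply i0
      have : 2 * i = 0 := by linear_combination h.1 + h2
      simpa using this
    · exact ⟨a + i, c, h, by linear_combination -hi - hdA, by ring⟩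
  obtain ⟨s, hs⟩ : ∃ s, s = p * x + q * y := ⟨_, rfl⟩
  obtain ⟨t, ht⟩ : ∃ t, t = r * x - p * y := ⟨_, rfl⟩
  have k' : 2 * (a * p) + b * r + c * q = 0 := by linear_combination k
  have k1 : a * s + b * t = -i * s := by
    subst hs ht; linear_combination x * k' - p * e1 - q * e2
  have k2 : c * s - a * t = -i * t := by
    subst hs ht; linear_combination y * k' - r * e1 + p * e2
  have hd : x * t - y * s ≠ 0 := by
    intro h
    have h1 : 2 * i * (x * s) = 0 := by linear_combination x * k1 - s * e1 - b * h
    have h2 : 2 * i * (y * t) = 0 := by linear_combination y * k2 - t * e2 + c * h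
    have h3 : x * s = 0 := by simpa [i0] using h1
    have h4 : y * t = 0 := by simpa [i0] using h2
    have h5 : p * s + q * t = -x := by subst hs ht; linear_combination -x * hdB
    have h6 : r * s - p * t = -y := by subst hs ht; linear_combination -y * hdB
    have : s = 0 ∧ t = 0 := by
      by_cases hx : x = 0
      · have hy : y ≠ 0 := fun hy => hxy ⟨hx, hy⟩
        subst hx
        refine ⟨?_, by simpa [hy] using h4⟩
        simpa [hy] using h
      · have hs0 : s = 0 := by simpa [hx] using h3
        refine ⟨hs0, ?_⟩
        rw [hs0] at h
        simpa [hx] using h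
    rw [this.1, this.2] at h5 h6
    exact hxy ⟨by linear_combination h5, by linear_combination h6⟩
  obtain ⟨m, hm⟩ := IsAlgClosed.exists_pow_nat_eq (x * t - y * s)⁻¹ (n := 2) (by norm_num)
  have hm' : m ^ 2 * (x * t - y * s) = 1 := by rw [hm]; exact inv_mul_cancel₀ hd
  let Q : Matrix.SpecialLinearGroup (Fin 2) F :=
    ⟨!![m * x, m * s; m * y, m * t], by
      rw [Matrix.det_fin_two_of]; linear_combination hm'⟩
  have hQ : (Q : Matrix (Fin 2) (Fin 2) F) = !![m * x, m * s; m * y, m * t] := rfl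
  have key : ∀ (X : Matrix.SpecialLinearGroup (Fin 2) F) (D : Matrix (Fin 2) (Fin 2) F),
      X.1 * Q.1 = Q.1 * D →
      ((Q⁻¹ * X * Q⁻¹⁻¹ : Matrix.SpecialLinearGroup (Fin 2) F) : Matrix (Fin 2) (Fin 2) F) = D := by
    intro X D h
    rw [inv_inv, Matrix.SpecialLinearGroup.coe_mul, Matrix.SpecialLinearGroup.coe_mul,
      Matrix.mul_assoc, h, ← Matrix.mul_assoc, ← Matrix.SpecialLinearGroup.coe_mul,
      inv_mul_cancel, Matrix.SpecialLinearGroup.coe_one, Matrix.one_mul]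
  refine ⟨Q⁻¹, key A _ ?_, key B _ ?_⟩
  · rw [hA', hQ, Matrix.mul_fin_two, Matrix.mul_fin_two]
    congr! 3
    · linear_combination m * e1
    · congr! 1
      linear_combination m * k1
    · congr! 1
      · linear_combination m * e2
      · congr! 1
        linear_combination m * k2
  · have h5 : p * s + q * t = -x := by subst hs ht; linear_combination -x * hdB
    have h6 : r * s - p * t = -y := by subst hs ht; linear_combination -y * hdB
    rw [hB', hQ, Matrix.mul_fin_two, Matrix.mul_fin_two]
    congr! 3
    · linear_combination -m * hs
    · congr! 1
      linear_combination m * h5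
    · congr! 1
      · linear_combination -m * ht
      · congr! 1
        linear_combination m * h6
end

section
/- Let F be an algebraically closed field of characteristic 0, let U be a finite-dimensional F-vector space of odd dimension, and let Q be a nondegenerate quadratic form on U with polar form b_Q(u,v) = Q(u+v) − Q(u) − Q(v). Let u, v ∈ U satisfy Q(u) = Q(v) = 0 and b_Q(u,v) = 1, and let U' = {w ∈ U : b_Q(u,w) = 0 and b_Q(v,w) = 0} with Q' the restriction of Q to U'. Then the even Clifford algebra Cl₀(U,Q) is isomorphic as an F-algebra to Mat₂(F) ⊗_F Cl₀(U',Q'). -/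
open scoped TensorProduct

namespace Stmt10

open CliffordAlgebra

section ringpart
variable {F A : Type*} [Field F] [Ring A] [Algebra F A]

/-- Matrix units from a hyperbolic pair. -/
def matHom (a b : A) (ha : a * a = 0) (hb : b * b = 0) (hab : a * b + b * a = 1) :
    Matrix (Fin 2) (Fin 2) F →ₐ[F] A :=
  AlgHom.ofLinearMap
    { toFun := fun M => M 0 0 • (a * b) + M 0 1 • a + M 1 0 • b + M 1 1 • (b * a)
      map_add' := by intro M N; simp only [Matrix.add_apply, add_smul]; abel
      map_smul' := by
        intro r M
        simp only [Matrix.smul_apply, smul_eq_mul, mul_smul, smul_add, RingHom.id_apply] }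
    (by simp [hab])
    (by
      intro M N
      have h1 : a * b * a = a := by
        have : b * a = 1 - a * b := by rw [← hab]; abel
        rw [mul_assoc, this, mul_sub, ← mul_assoc, ha]; simp
      have h2 : b * a * b = b := by
        have : a * b = 1 - b * a := by rw [← hab]; abel
        rw [mul_assoc, this, mul_sub, ← mul_assoc, hb]; simp
      have e1 : a * b * (a * b) = a * b := by rw [← mul_assoc, h1]
      have e2 : a * b * b = 0 := by rw [mul_assoc, hb, mul_zero]
      have e3 : a * b * (b * a) = 0 := by rw [← mul_assoc, e2, zero_mul]
      have e4 : a * (a * b) = 0 := by rw [← mul_assoc, ha, zero_mul]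
      have e5 : a * (b * a) = a := by rw [← mul_assoc, h1]
      have e6 : b * (a * b) = b := by rw [← mul_assoc, h2]
      have e7 : b * (b * a) = 0 := by rw [← mul_assoc, hb, zero_mul]
      have e8 : b * a * (a * b) = 0 := by rw [mul_assoc, e4, mul_zero]
      have e9 : b * a * a = 0 := by rw [mul_assoc, ha, mul_zero]
      have e10 : b * a * (b * a) = b * a := by rw [mul_assoc, e5]
      simp only [LinearMap.coe_mk, AddHom.coe_mk, Matrix.mul_apply, Fin.sum_univ_two, mul_add,
        add_mul, smul_mul_smul_comm, ha, hb, h1, h2, e1, e2, e3, e4, e5, e6, e7, e8, e9, e10,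
        smul_zero, add_smul]
      abel)

theorem matHom_apply (a b : A) (ha : a * a = 0) (hb : b * b = 0) (hab : a * b + b * a = 1)
    (M : Matrix (Fin 2) (Fin 2) F) : matHom a b ha hb hab M =
      M 0 0 • (a * b) + M 0 1 • a + M 1 0 • b + M 1 1 • (b * a) := rfl

/-- Conjugation by an involution. -/
def conjHom (D : A) (hD : D * D = 1) : A →ₐ[F] A :=
  AlgHom.ofLinearMap
    { toFun := fun x => D * x * D
      map_add' := by intro x y; simp only [mul_add, add_mul]
      map_smul' := by intro r x; simp }
    (by simp [hD])
    (by
      intro x y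
      change D * (x * y) * D = D * x * D * (D * y * D)
      have : D * x * D * (D * y * D) = D * x * (D * D) * y * D := by simp only [mul_assoc]
      rw [this, hD]; simp only [mul_assoc, mul_one])

theorem conjHom_apply (D : A) (hD : D * D = 1) (x : A) :
    conjHom (F := F) D hD x = D * x * D := rfl

theorem conjHom_inj (D : A) (hD : D * D = 1) : Function.Injective (conjHom (F := F) D hD) := by
  apply Function.LeftInverse.injective (g := conjHom (F := F) D hD)
  intro x
  simp only [conjHom_apply]
  have : D * (D * x * D) * D = (D * D) * x * (D * D) := by simp only [mul_assoc]
  rw [this, hD]; simp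

end ringpart

section main
variable {F U W : Type*} [Field F] [AddCommGroup U] [Module F U] [AddCommGroup W] [Module F W]
  {Q : QuadraticForm F U} {Q' : QuadraticForm F W}

/-- The inclusion of the even Clifford algebra of the orthogonal complement. -/
def evHom (j : Q' →qᵢ Q) : even Q' →ₐ[F] CliffordAlgebra Q :=
  (CliffordAlgebra.map j).comp (even Q').val

theorem evHom_ι (j : Q' →qᵢ Q) (w w' : W) :
    evHom j ((even.ι Q').bilin w w') = ι Q (j w) * ι Q (j w') := by
  change CliffordAlgebra.map j (ι Q' w * ι Q' w') = _
  simp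

theorem evHom_comm (j : Q' →qᵢ Q) (u : U)
    (hju : ∀ w, ι Q (j w) * ι Q u = - (ι Q u * ι Q (j w))) (x : even Q') :
    Commute (ι Q u) (evHom j x) := by
  obtain ⟨x, hx⟩ := x
  change Commute (ι Q u) (CliffordAlgebra.map j x)
  induction x, hx using even_induction with
  | algebraMap r => rw [AlgHom.commutes]; exact (Algebra.commutes _ _).symm
  | add x y hx hy ihx ihy => rw [map_add]; exact ihx.add_right ihy
  | ι_mul_ι_mul m₁ m₂ x hx ih =>
    rw [map_mul, map_mul]
    refine Commute.mul_right ?_ ih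
    rw [map_apply_ι, map_apply_ι]
    change ι Q u * (ι Q (j m₁) * ι Q (j m₂)) = (ι Q (j m₁) * ι Q (j m₂)) * ι Q u
    rw [mul_assoc, hju, mul_neg, ← mul_assoc, ← mul_assoc, hju, neg_mul, neg_neg]

/-- The matrix model. -/
def rhoLin (Q' : QuadraticForm F W) (s t : U →ₗ[F] F) (p : U →ₗ[F] W) :
    U →ₗ[F] Matrix (Fin 2) (Fin 2) (CliffordAlgebra Q') where
  toFun m := !![ι Q' (p m), algebraMap F _ (s m); algebraMap F _ (t m), - ι Q' (p m)]
  map_add' x y := by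
    ext i k; fin_cases i <;> fin_cases k <;> simp [add_comm]
  map_smul' r x := by
    ext i k; fin_cases i <;> fin_cases k <;> simp [Algebra.smul_def]

theorem rhoLin_sq (s t : U →ₗ[F] F) (p : U →ₗ[F] W)
    (hQ : ∀ m, Q m = Q' (p m) + s m * t m) (m : U) :
    rhoLin Q' s t p m * rhoLin Q' s t p m = algebraMap F _ (Q m) := by
  have hs : algebraMap F _ (s m) * ι Q' (p m) = ι Q' (p m) * algebraMap F _ (s m) :=
    Algebra.commutes _ _
  have ht : algebraMap F _ (t m) * ι Q' (p m) = ι Q' (p m) * algebraMap F _ (t m) :=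
    Algebra.commutes _ _
  have hst : algebraMap F (CliffordAlgebra Q') (t m) * algebraMap F _ (s m) =
    algebraMap F _ (s m) * algebraMap F _ (t m) := Algebra.commutes _ _
  have hac : algebraMap F (CliffordAlgebra Q') (s m) * algebraMap F _ (t m) +
    algebraMap F _ (Q' (p m)) = algebraMap F _ (Q' (p m)) +
    algebraMap F (CliffordAlgebra Q') (s m) * algebraMap F _ (t m) := add_comm _ _
  ext i k; fin_cases i <;> fin_cases k <;>
    simp [rhoLin, Matrix.mul_apply, Matrix.algebraMap_matrix_apply, hQ, hs, ht, hst, hac]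

/-- The matrix model of the Clifford algebra. -/
def rho (s t : U →ₗ[F] F) (p : U →ₗ[F] W) (hQ : ∀ m, Q m = Q' (p m) + s m * t m) :
    CliffordAlgebra Q →ₐ[F] Matrix (Fin 2) (Fin 2) (CliffordAlgebra Q') :=
  CliffordAlgebra.lift Q ⟨rhoLin Q' s t p, rhoLin_sq s t p hQ⟩

/-- Canonical map. -/
def can (Q' : QuadraticForm F W) : Matrix (Fin 2) (Fin 2) F ⊗[F] even Q' →ₐ[F]
    Matrix (Fin 2) (Fin 2) (CliffordAlgebra Q') :=
  ((even Q').val.mapMatrix).comp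
    (((Algebra.TensorProduct.comm F _ _).trans
      (matrixEquivTensor (Fin 2) F (even Q')).symm : _ ≃ₐ[F] _) : _ →ₐ[F] _)

theorem can_inj : Function.Injective (can Q') := by
  unfold can
  rw [AlgHom.coe_comp]
  refine Function.Injective.comp ?_ (AlgEquiv.injective _)
  intro M N h
  ext i k
  exact congrFun (congrFun h i) k

theorem can_tmul (M : Matrix (Fin 2) (Fin 2) F) (x : even Q') (i k) :
    can Q' (M ⊗ₜ x) i k = M i k • (x : CliffordAlgebra Q') := by
  simp [can, Algebra.smul_def, Algebra.commutes]

set_option maxHeartbeats 1000000 in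
theorem main (u v : U) (hu : Q u = 0) (hv : Q v = 0) (huv : QuadraticMap.polar Q u v = 1)
    (j : Q' →qᵢ Q) (hju : ∀ w, QuadraticMap.polar Q (j w) u = 0)
    (hjv : ∀ w, QuadraticMap.polar Q (j w) v = 0)
    (s t : U →ₗ[F] F) (p : U →ₗ[F] W) (hm : ∀ m, m = s m • u + t m • v + j (p m))
    (hsu : s u = 1) (hsv : s v = 0) (htu : t u = 0) (htv : t v = 1) (hpu : p u = 0) (hpv : p v = 0)
    (hpj : ∀ w, p (j w) = w) (hsj : ∀ w, s (j w) = 0) (htj : ∀ w, t (j w) = 0)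
    (hQm : ∀ m, Q m = Q' (p m) + s m * t m)
    (w₀ : W) (hw₀ : Q' w₀ = 1) :
    Nonempty (even Q ≃ₐ[F] Matrix (Fin 2) (Fin 2) F ⊗[F] even Q') := by
  set a := ι Q u with ha_def
  set b := ι Q v with hb_def
  set e := ι Q (j w₀) with he_def
  have ha : a * a = 0 := by rw [ha_def, ι_sq_scalar, hu, map_zero]
  have hb : b * b = 0 := by rw [hb_def, ι_sq_scalar, hv, map_zero]
  have hab : a * b + b * a = 1 := by rw [ha_def, hb_def, ι_mul_ι_add_swap, huv, map_one]
  have he : e * e = 1 := by rw [he_def, ι_sq_scalar, j.map_app, hw₀, map_one]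
  have hwa : ∀ w, ι Q (j w) * a = - (a * ι Q (j w)) := by
    intro w; rw [eq_neg_iff_add_eq_zero, ha_def, ι_mul_ι_add_swap, hju, map_zero]
  have hwb : ∀ w, ι Q (j w) * b = - (b * ι Q (j w)) := by
    intro w; rw [eq_neg_iff_add_eq_zero, hb_def, ι_mul_ι_add_swap, hjv, map_zero]
  have hea : e * a = - (a * e) := hwa _
  have heb : e * b = - (b * e) := hwb _
  have h1 : a * b * a = a := by
    have : b * a = 1 - a * b := by rw [← hab]; abel
    rw [mul_assoc, this, mul_sub, ← mul_assoc, ha]; simp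
  have h2 : b * a * b = b := by
    have : a * b = 1 - b * a := by rw [← hab]; abel
    rw [mul_assoc, this, mul_sub, ← mul_assoc, hb]; simp
  have hwab : ∀ w, ι Q (j w) * (a * b) = a * b * ι Q (j w) := by
    intro w; rw [← mul_assoc, hwa, neg_mul, mul_assoc, hwb, mul_neg, neg_neg, mul_assoc]
  have hwba : ∀ w, ι Q (j w) * (b * a) = b * a * ι Q (j w) := by
    intro w; rw [← mul_assoc, hwb, neg_mul, mul_assoc, hwa, mul_neg, neg_neg, mul_assoc]
  set D := a * b + b * a * e with hD_def
  have p1 : (a * b) * (a * b) = a * b := by rw [← mul_assoc, h1]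
  have p2 : (a * b) * (b * a) = 0 := by rw [← mul_assoc, mul_assoc a, hb]; simp
  have p3 : (b * a) * (a * b) = 0 := by rw [← mul_assoc, mul_assoc b, ha]; simp
  have p4 : (b * a) * (b * a) = b * a := by rw [← mul_assoc, h2]
  have hbaeab : b * a * e * (a * b) = 0 := by
    rw [mul_assoc, hwab w₀, ← mul_assoc, p3, zero_mul]
  have hbaeba : b * a * e * (b * a) = b * a * e := by
    rw [mul_assoc, hwba w₀, ← mul_assoc, p4]
  have hD : D * D = 1 := by
    have q2 : a * b * (b * a * e) = 0 := by rw [← mul_assoc, p2, zero_mul]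
    have q3 : b * a * e * (b * a * e) = b * a := by
      rw [← mul_assoc, hbaeba, mul_assoc, he, mul_one]
    rw [hD_def, add_mul, mul_add, mul_add, p1, q2, hbaeab, q3, ← hab]; abel
  -- the untwisted map
  let ψ : Matrix (Fin 2) (Fin 2) F ⊗[F] even Q' →ₐ[F] CliffordAlgebra Q :=
    Algebra.TensorProduct.lift (matHom a b ha hb hab) (evHom j) (by
      intro M x
      have c1 := evHom_comm j u hwa x
      have c2 := evHom_comm j v hwb x
      rw [matHom_apply]
      exact ((((c1.mul_left c2).smul_left _).add_left (c1.smul_left _)).add_left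
        (c2.smul_left _)).add_left ((c2.mul_left c1).smul_left _))
  have hψ : ∀ M x, ψ (M ⊗ₜ x) = matHom a b ha hb hab M * evHom j x := fun M x => by
    simp [ψ]
  have hρι : ∀ m, rho (Q := Q) (Q' := Q') s t p hQm (ι Q m) = rhoLin Q' s t p m := fun m => by
    simp [rho]
  have hρψ : (rho s t p hQm).comp ψ = can Q' := by
    apply Algebra.TensorProduct.ext
    · ext M i k
      simp only [AlgHom.comp_apply, Algebra.TensorProduct.includeLeft_apply, hψ, can_tmul, map_one,
        mul_one, matHom_apply, map_add, map_smul, map_mul, ha_def, hb_def, hρι]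
      fin_cases i <;> fin_cases k <;>
        simp [rhoLin, hsu, hsv, htu, htv, hpu, hpv]
    · ext w w' i k
      change (rho s t p hQm) (ψ (1 ⊗ₜ (even.ι Q').bilin w w')) i k =
        can Q' (1 ⊗ₜ (even.ι Q').bilin w w') i k
      simp only [hψ, can_tmul, map_one, one_mul, evHom_ι, map_mul, hρι]
      have : (((even.ι Q').bilin w w' : even Q') : CliffordAlgebra Q') = ι Q' w * ι Q' w' := rfl
      rw [this]
      fin_cases i <;> fin_cases k <;>
        simp [rhoLin, Matrix.mul_apply, hpj, hsj, htj]
  have hψinj : Function.Injective ψ := by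
    have : Function.Injective ((rho s t p hQm).comp ψ) := by rw [hρψ]; exact can_inj
    rw [AlgHom.coe_comp] at this
    exact this.of_comp
  let Ψ := (conjHom (F := F) D hD).comp ψ
  have hΨinj : Function.Injective Ψ := by
    rw [AlgHom.coe_comp]; exact (conjHom_inj D hD).comp hψinj
  have hΨ : ∀ M x, Ψ (M ⊗ₜ x) = Ψ (M ⊗ₜ 1) * Ψ (1 ⊗ₜ x) := fun M x => by
    rw [← map_mul]; simp
  have hev : ∀ m m', ι Q m * ι Q m' ∈ even Q := fun m m' => ι_mul_ι_mem_evenOdd_zero Q m m'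
  have hΨM : ∀ M, Ψ (M ⊗ₜ 1) = M 0 0 • (a * b) + M 0 1 • (a * e) + M 1 0 • (e * b)
      + M 1 1 • (b * a) := by
    intro M
    change D * ψ (M ⊗ₜ 1) * D = _
    rw [hψ, map_one, mul_one, matHom_apply]
    have d1 : D * (a * b) * D = a * b := by
      rw [hD_def, add_mul, p1, hbaeab, add_zero, mul_add, p1, ← mul_assoc, p2]; simp
    have d2 : D * a * D = a * e := by
      have : D * a = a := by
        rw [hD_def, add_mul, h1, mul_assoc, hea, mul_neg, ← mul_assoc, mul_assoc b, ha]; simp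
      rw [this, hD_def, mul_add, ← mul_assoc, ha, ← mul_assoc, ← mul_assoc, h1]; simp
    have d3 : D * b * D = e * b := by
      have : D * b = e * b := by
        rw [hD_def, add_mul, mul_assoc, hb, mul_assoc, heb, mul_neg, ← mul_assoc, h2]; simp
      rw [this, hD_def, mul_add, mul_assoc, ← mul_assoc b, h2, mul_assoc, ← mul_assoc b,
        ← mul_assoc b, hb]; simp
    have d4 : D * (b * a) * D = b * a := by
      rw [hD_def, add_mul, p2, hbaeba, zero_add, mul_add, hbaeab, ← mul_assoc, hbaeba, mul_assoc,
        he]; simp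
    simp only [mul_add, add_mul, mul_smul_comm, smul_mul_assoc, d1, d2, d3, d4]
  have hΨw : ∀ w w', Ψ (1 ⊗ₜ (even.ι Q').bilin w w') =
      a * b * (ι Q (j w) * ι Q (j w')) + b * a * ((e * ι Q (j w)) * (ι Q (j w') * e)) := by
    intro w w'
    change D * ψ _ * D = _
    rw [hψ, map_one, one_mul, evHom_ι]
    set x := ι Q (j w)
    set y := ι Q (j w')
    have cx : x * y * (a * b) = a * b * (x * y) := by
      rw [mul_assoc, hwab, ← mul_assoc, hwab, mul_assoc]
    have cy : x * y * (b * a) = b * a * (x * y) := by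
      rw [mul_assoc, hwba, ← mul_assoc, hwba, mul_assoc]
    have k : x * y * D = a * b * (x * y) + b * a * (x * y * e) := by
      rw [hD_def, mul_add, cx, ← mul_assoc (x * y) (b * a), cy, mul_assoc (b * a)]
    rw [mul_assoc, k, hD_def, add_mul, mul_add, mul_add, ← mul_assoc (a * b) (a * b), p1,
      ← mul_assoc (a * b) (b * a), p2, ← mul_assoc (b * a * e) (a * b), hbaeab,
      ← mul_assoc (b * a * e) (b * a), hbaeba]
    simp [mul_assoc]
  have hle : ∀ T, Ψ T ∈ even Q := by
    intro T
    induction T with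
    | zero => rw [map_zero]; exact zero_mem _
    | add x y hx hy => rw [map_add]; exact add_mem hx hy
    | tmul M x =>
      rw [hΨ]
      refine mul_mem ?_ ?_
      · rw [hΨM]
        exact add_mem (add_mem (add_mem (Subalgebra.smul_mem _ (hev _ _) _)
          (Subalgebra.smul_mem _ (hev _ _) _)) (Subalgebra.smul_mem _ (hev _ _) _))
          (Subalgebra.smul_mem _ (hev _ _) _)
      · obtain ⟨x, hx⟩ := x
        induction x, hx using even_induction with
        | algebraMap r =>
          have : (⟨algebraMap F _ r, Subalgebra.algebraMap_mem _ r⟩ : even Q') =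
            algebraMap F _ r := rfl
          rw [this, ← Algebra.TensorProduct.algebraMap_apply', AlgHom.commutes]
          exact Subalgebra.algebraMap_mem _ _
        | add x y hx hy ihx ihy =>
          have := add_mem ihx ihy
          rwa [← map_add, ← TensorProduct.tmul_add] at this
        | ι_mul_ι_mul m₁ m₂ x hx ih =>
          have : Ψ (1 ⊗ₜ (even.ι Q').bilin m₁ m₂) ∈ even Q := by
            rw [hΨw]
            exact add_mem (mul_mem (hev _ _) (hev _ _))
              (mul_mem (hev _ _) (mul_mem (hev _ _) (hev _ _)))
          have := mul_mem this ih
          rwa [← map_mul, Algebra.TensorProduct.tmul_mul_tmul, one_mul] at this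
  -- surjectivity
  have rab : a * b ∈ Ψ.range := ⟨!![1, 0; 0, 0] ⊗ₜ 1, by
    change Ψ _ = _; rw [hΨM]; simp⟩
  have rae : a * e ∈ Ψ.range := ⟨!![0, 1; 0, 0] ⊗ₜ 1, by
    change Ψ _ = _; rw [hΨM]; simp⟩
  have reb : e * b ∈ Ψ.range := ⟨!![0, 0; 1, 0] ⊗ₜ 1, by
    change Ψ _ = _; rw [hΨM]; simp⟩
  have rba : b * a ∈ Ψ.range := ⟨!![0, 0; 0, 1] ⊗ₜ 1, by
    change Ψ _ = _; rw [hΨM]; simp⟩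
  have rw1 : ∀ w w', a * b * (ι Q (j w) * ι Q (j w')) ∈ Ψ.range := by
    intro w w'
    have : a * b * Ψ (1 ⊗ₜ (even.ι Q').bilin w w') ∈ Ψ.range := mul_mem rab ⟨_, rfl⟩
    rw [hΨw, mul_add, ← mul_assoc (a * b) (a * b), p1, ← mul_assoc (a * b) (b * a), p2, zero_mul, add_zero] at this
    exact this
  have rw2 : ∀ w w', b * a * (ι Q (j w) * ι Q (j w')) ∈ Ψ.range := by
    intro w w'
    have : b * a * (Ψ (1 ⊗ₜ (even.ι Q').bilin w₀ w) * Ψ (1 ⊗ₜ (even.ι Q').bilin w' w₀)) ∈ Ψ.range :=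
      mul_mem rba (mul_mem ⟨_, rfl⟩ ⟨_, rfl⟩)
    have c : ∀ x y, ι Q (j x) * ι Q (j y) * (b * a) = b * a * (ι Q (j x) * ι Q (j y)) := by
      intro x y
      rw [mul_assoc, hwba, ← mul_assoc, hwba, mul_assoc]
    have r1 : b * a * Ψ (1 ⊗ₜ (even.ι Q').bilin w₀ w) = ι Q (j w) * e * (b * a) := by
      rw [hΨw, mul_add, ← mul_assoc (b * a) (a * b), p3, ← mul_assoc (b * a) (b * a), p4, zero_mul,
        zero_add]
      change b * a * (e * e * _) = _
      rw [he, one_mul, c]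
    have r2 : b * a * Ψ (1 ⊗ₜ (even.ι Q').bilin w' w₀) = b * a * (e * ι Q (j w')) := by
      rw [hΨw, mul_add, ← mul_assoc (b * a) (a * b), p3, ← mul_assoc (b * a) (b * a), p4, zero_mul,
        zero_add]
      change b * a * (_ * (e * e)) = _
      rw [he, mul_one]
    rw [← mul_assoc, r1, mul_assoc, r2, ← mul_assoc, c, mul_assoc, mul_assoc (ι Q (j w)),
      ← mul_assoc e, he, one_mul] at this
    exact this
  have rww : ∀ w w', ι Q (j w) * ι Q (j w') ∈ Ψ.range := by
    intro w w'
    have := add_mem (rw1 w w') (rw2 w w')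
    rwa [← add_mul, hab, one_mul] at this
  have raw : ∀ w, a * ι Q (j w) ∈ Ψ.range := by
    intro w
    have := mul_mem rae (rww w₀ w)
    rw [mul_assoc] at this
    change a * (e * (e * _)) ∈ _ at this
    rwa [← mul_assoc e, he, one_mul] at this
  have rbw : ∀ w, b * ι Q (j w) ∈ Ψ.range := by
    intro w
    have := neg_mem (mul_mem reb (rww w₀ w))
    rw [heb, neg_mul, neg_neg, mul_assoc] at this
    change b * (e * (e * _)) ∈ _ at this
    rwa [← mul_assoc e, he, one_mul] at this
  have rwa' : ∀ w, ι Q (j w) * a ∈ Ψ.range := fun w => by rw [hwa]; exact neg_mem (raw w)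
  have rwb' : ∀ w, ι Q (j w) * b ∈ Ψ.range := fun w => by rw [hwb]; exact neg_mem (rbw w)
  have rall : ∀ m m', ι Q m * ι Q m' ∈ Ψ.range := by
    intro m m'
    have d : ∀ m, ι Q m = s m • a + t m • b + ι Q (j (p m)) := fun m => by
      conv_lhs => rw [hm m]
      simp only [map_add, map_smul]
      rfl
    have kl : ∀ y, a * y ∈ Ψ.range → b * y ∈ Ψ.range → (∀ w, ι Q (j w) * y ∈ Ψ.range) →
        ι Q m * y ∈ Ψ.range := by
      intro y y1 y2 y3
      rw [d m, add_mul, add_mul, smul_mul_assoc, smul_mul_assoc]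
      exact add_mem (add_mem (Subalgebra.smul_mem _ y1 _) (Subalgebra.smul_mem _ y2 _)) (y3 _)
    rw [d m', mul_add, mul_add, mul_smul_comm, mul_smul_comm]
    refine add_mem (add_mem (Subalgebra.smul_mem _ (kl a ?_ rba rwa') _)
      (Subalgebra.smul_mem _ (kl b rab ?_ rwb') _)) (kl _ (raw _) (rbw _) (fun w => rww _ _))
    · rw [ha]; exact zero_mem _
    · rw [hb]; exact zero_mem _
  have hge : ∀ x ∈ even Q, x ∈ Ψ.range := by
    intro x hx
    induction x, hx using even_induction with
    | algebraMap r => exact Subalgebra.algebraMap_mem _ r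
    | add x y hx hy ihx ihy => exact add_mem ihx ihy
    | ι_mul_ι_mul m₁ m₂ x hx ih => exact mul_mem (rall _ _) ih
  have hbij : Function.Bijective (Ψ.codRestrict (even Q) hle) := by
    constructor
    · intro x y h
      exact hΨinj (congrArg Subtype.val h)
    · rintro ⟨x, hx⟩
      obtain ⟨T, hT⟩ := hge x hx
      exact ⟨T, Subtype.ext hT⟩
  exact ⟨(AlgEquiv.ofBijective _ hbij).symm⟩

end main

end Stmt10

/-- if `(U,Q)` is an odd-dimensional nondegenerate quadratic space,
`u, v` are isotropic vectors with `polar Q u v = 1`, and `U'` is the subspace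
orthogonal to `u` and `v`, then the even Clifford algebra `Cl₀(U,Q)` is isomorphic
to `Mat₂(F) ⊗ Cl₀(U',Q')`, where `Q'` is the restriction of `Q` to `U'`. -/
theorem stmt_10 {F U : Type*} [Field F] [IsAlgClosed F] [CharZero F]
    [AddCommGroup U] [Module F U] [FiniteDimensional F U]
    (hodd : Odd (Module.finrank F U))
    (Q : QuadraticForm F U)
    (hQ : ∀ x : U, (∀ y : U, QuadraticMap.polar (⇑Q) x y = 0) → x = 0)
    (u v : U) (hu : Q u = 0) (hv : Q v = 0) (huv : QuadraticMap.polar (⇑Q) u v = 1) :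
    Nonempty ((CliffordAlgebra.even Q) ≃ₐ[F]
      (Matrix (Fin 2) (Fin 2) F ⊗[F]
        (CliffordAlgebra.even (Q.comp
          (LinearMap.ker (Q.polarBilin u) ⊓ LinearMap.ker (Q.polarBilin v)).subtype)))) := by
  set W := LinearMap.ker (Q.polarBilin u) ⊓ LinearMap.ker (Q.polarBilin v) with hW
  have hmemW : ∀ w, w ∈ W ↔ Q.polarBilin u w = 0 ∧ Q.polarBilin v w = 0 := fun w => by
    rw [hW, Submodule.mem_inf, LinearMap.mem_ker, LinearMap.mem_ker]
  have huu : Q.polarBilin u u = 0 := by simp [QuadraticMap.polarBilin_apply_apply, hu]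
  have hvv : Q.polarBilin v v = 0 := by simp [QuadraticMap.polarBilin_apply_apply, hv]
  have huv' : Q.polarBilin u v = 1 := huv
  have hvu' : Q.polarBilin v u = 1 := by
    rw [← huv]; exact QuadraticMap.polar_comm _ _ _
  let p0 : U →ₗ[F] U := LinearMap.id - (Q.polarBilin v).smulRight u - (Q.polarBilin u).smulRight v
  have hp0 : ∀ m, p0 m = m - Q.polarBilin v m • u - Q.polarBilin u m • v := fun m => rfl
  have hp0W : ∀ m, p0 m ∈ W := fun m => by
    rw [hmemW, hp0]
    simp only [map_sub, map_smul, huu, hvv, huv', hvu', smul_eq_mul]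
    constructor <;> ring
  let p : U →ₗ[F] W := p0.codRestrict W hp0W
  have hp : ∀ m, ((p m : W) : U) = m - Q.polarBilin v m • u - Q.polarBilin u m • v := fun m => rfl
  have hdec : ∀ m, m = Q.polarBilin v m • u + Q.polarBilin u m • v + (p m : U) := fun m => by
    rw [hp]; abel
  have hpolW : ∀ w : W, QuadraticMap.polar Q u w = 0 ∧ QuadraticMap.polar Q v w = 0 :=
    fun w => (hmemW w).1 w.2
  have hex : ∃ w : W, Q (w : U) ≠ 0 := by
    by_contra! hcon
    have hz : ∀ w : W, (w : U) = 0 := by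
      intro w
      apply hQ
      intro y
      rw [hdec y, QuadraticMap.polar_add_right, QuadraticMap.polar_add_right,
        QuadraticMap.polar_smul_right, QuadraticMap.polar_smul_right,
        QuadraticMap.polar_comm _ (w : U) u, QuadraticMap.polar_comm _ (w : U) v,
        (hpolW w).1, (hpolW w).2, QuadraticMap.polar, hcon w, hcon (p y)]
      have := hcon (w + p y)
      rw [Submodule.coe_add] at this
      rw [this]; simp
    let E : U ≃ₗ[F] F × F := LinearEquiv.ofLinearMap
      ((Q.polarBilin v).prod (Q.polarBilin u))
      (((LinearMap.id : F →ₗ[F] F).smulRight u).coprod ((LinearMap.id : F →ₗ[F] F).smulRight v))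
      (by
        have hvu2 : QuadraticMap.polar Q v u = 1 := hvu'
        ext <;> simp [hvu2, huv, hu, hv])
      (by
        ext m
        have := hdec m
        rw [hz, add_zero] at this
        exact this.symm)
    have := E.finrank_eq
    rw [Module.finrank_prod, Module.finrank_self] at this
    rw [this] at hodd
    exact absurd hodd (by decide)
  obtain ⟨w, hw⟩ := hex
  obtain ⟨r, hr⟩ := IsAlgClosed.exists_pow_nat_eq (Q (w : U))⁻¹ (n := 2) (by norm_num)
  refine Stmt10.main (Q := Q) (Q' := Q.comp W.subtype) u v hu hv huv
    ⟨W.subtype, fun _ => rfl⟩ (fun w => ?_) (fun w => ?_)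
    (Q.polarBilin v) (Q.polarBilin u) p hdec hvu' hvv huu huv' ?_ ?_ (fun w => ?_)
    (fun w => (hpolW w).2) (fun w => (hpolW w).1) (fun m => ?_) (r • w) ?_
  · rw [QuadraticMap.polar_comm]; exact (hpolW w).1
  · rw [QuadraticMap.polar_comm]; exact (hpolW w).2
  · apply Subtype.ext; rw [hp, huu, hvu']; simp
  · apply Subtype.ext; rw [hp, hvv, huv']; simp
  · apply Subtype.ext
    rw [hp]
    change (w : U) - QuadraticMap.polar Q v w • u - QuadraticMap.polar Q u w • v = w
    rw [(hpolW w).1, (hpolW w).2]; simp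
  · have h1 : Q (Q.polarBilin v m • u + Q.polarBilin u m • v) =
        Q.polarBilin v m * Q.polarBilin u m := by
      rw [QuadraticMap.map_add Q, QuadraticMap.map_smul, QuadraticMap.map_smul, hu, hv,
        QuadraticMap.polar_smul_left, QuadraticMap.polar_smul_right, huv]
      simp
    conv_lhs => rw [hdec m]
    rw [QuadraticMap.map_add Q, h1, QuadraticMap.polar_add_left, QuadraticMap.polar_smul_left,
      QuadraticMap.polar_smul_left, (hpolW _).1, (hpolW _).2]
    simp [add_comm]
  · change Q (((r • w : W)) : U) = 1
    rw [Submodule.coe_smul, QuadraticMap.map_smul, ← pow_two, hr, smul_eq_mul, inv_mul_cancel₀ hw]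
end

section
/- Let F be an algebraically closed field of characteristic 0, 𝒬 = Mat₂(F) with standard involution x̄ = tr(x)·I − x and norm polar form N(x,u) = det(x+u) − det(x) − det(u), and q₂ = [[0,1],[1,0]]. Regard 𝒬 ⊗_F 𝒬 as a right 𝒬-module via (x⊗y)·q = x⊗(yq), let Φ : 𝒬 ⊗_F 𝒬 ⊗_F 𝒬 → End_𝒬(𝒬 ⊗_F 𝒬) be the F-linear map determined by Φ(a⊗b⊗c)(x⊗y) = (a x b̄)⊗(c y), let σ : 𝒬 ⊗_F 𝒬 ⊗_F 𝒬 → 𝒬 ⊗_F 𝒬 ⊗_F 𝒬 be the F-linear map determined by σ(a⊗b⊗c) = ā ⊗ b̄ ⊗ (q₂⁻¹ c̄ q₂), and let h : (𝒬 ⊗_F 𝒬) × (𝒬 ⊗_F 𝒬) → 𝒬 be the F-bilinear map determined by h(x⊗y, u⊗v) = ȳ q₂ v · N(x,u). Then for every r ∈ 𝒬 ⊗_F 𝒬 ⊗_F 𝒬 and all z, w ∈ 𝒬 ⊗_F 𝒬: h(Φ(r)(z), w) = h(z, Φ(σ(r))(w)). -/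
open scoped TensorProduct

set_option maxHeartbeats 800000
set_option synthInstance.maxHeartbeats 200000

/-- The split quaternion algebra `𝒬 = Mat₂(F)`. -/
abbrev Q2 (F : Type*) [Field F] : Type _ := Matrix (Fin 2) (Fin 2) F

/-- The standard involution `x ↦ tr(x)·1 - x` of `𝒬 = Mat₂(F)`. -/
noncomputable def quatConj (F : Type*) [Field F] (x : Q2 F) : Q2 F :=
  Matrix.trace x • (1 : Q2 F) - x

noncomputable def q2 (F : Type*) [Field F] : Q2 F := !![0, 1; 1, 0]

theorem quatConj_mul_aux {F : Type*} [Field F] (x y : Q2 F) :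
    quatConj F (x * y) = quatConj F y * quatConj F x := by
  ext i j
  fin_cases i <;> fin_cases j <;>
    simp [quatConj, Matrix.trace, Matrix.mul_apply, Fin.sum_univ_two] <;> ring

theorem q2_mul_inv_aux {F : Type*} [Field F] : q2 F * (q2 F)⁻¹ = 1 := by
  apply Matrix.mul_nonsing_inv
  simp [q2, Matrix.det_fin_two]

theorem norm_aux {F : Type*} [Field F] (a b x u : Q2 F) :
    Matrix.det (a * x * quatConj F b + u) - Matrix.det (a * x * quatConj F b) - Matrix.det u =
    Matrix.det (x + quatConj F a * u * quatConj F (quatConj F b)) - Matrix.det x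
      - Matrix.det (quatConj F a * u * quatConj F (quatConj F b)) := by
  simp [quatConj, Matrix.det_fin_two, Matrix.trace, Matrix.mul_apply, Fin.sum_univ_two]
  ring

/-- the bar involution corresponds to the adjoint with respect to the
skew-hermitian form `h`: for `Φ(a⊗b⊗c)(x⊗y) = (a x b̄) ⊗ (c y)` and
`σ(a⊗b⊗c) = ā ⊗ b̄ ⊗ (q₂⁻¹ c̄ q₂)` one has `h(Φ(r)z, w) = h(z, Φ(σ(r))w)`. -/
theorem stmt_17 {F : Type*} [Field F] [IsAlgClosed F] [CharZero F]
    (Φ : ((Q2 F ⊗[F] Q2 F) ⊗[F] Q2 F) →ₗ[F] Module.End F (Q2 F ⊗[F] Q2 F))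
    (hΦ : ∀ a b c x y : Q2 F,
      Φ ((a ⊗ₜ[F] b) ⊗ₜ[F] c) (x ⊗ₜ[F] y) = (a * x * quatConj F b) ⊗ₜ[F] (c * y))
    (σ : ((Q2 F ⊗[F] Q2 F) ⊗[F] Q2 F) →ₗ[F] ((Q2 F ⊗[F] Q2 F) ⊗[F] Q2 F))
    (hσ : ∀ a b c : Q2 F, σ ((a ⊗ₜ[F] b) ⊗ₜ[F] c) =
      (quatConj F a ⊗ₜ[F] quatConj F b) ⊗ₜ[F] ((q2 F)⁻¹ * quatConj F c * q2 F))
    (h : (Q2 F ⊗[F] Q2 F) →ₗ[F] (Q2 F ⊗[F] Q2 F) →ₗ[F] Q2 F)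
    (hh : ∀ x y u v : Q2 F, h (x ⊗ₜ[F] y) (u ⊗ₜ[F] v) =
      (Matrix.det (x + u) - Matrix.det x - Matrix.det u) •
        (quatConj F y * q2 F * v)) :
    ∀ (r : (Q2 F ⊗[F] Q2 F) ⊗[F] Q2 F) (z w : Q2 F ⊗[F] Q2 F),
      h (Φ r z) w = h z (Φ (σ r) w) := by
  intro r z w
  induction r using TensorProduct.induction_on with
  | zero => simp
  | add r s hr hs => simp only [map_add, LinearMap.add_apply, hr, hs]
  | tmul ab c =>
  induction ab using TensorProduct.induction_on with
  | zero => simp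
  | add r s hr hs => simp only [TensorProduct.add_tmul, map_add, LinearMap.add_apply, hr, hs]
  | tmul a b =>
  induction z using TensorProduct.induction_on with
  | zero => simp
  | add r s hr hs => simp only [map_add, LinearMap.add_apply, hr, hs]
  | tmul x y =>
  induction w using TensorProduct.induction_on with
  | zero => simp
  | add r s hr hs => simp only [map_add, hr, hs]
  | tmul u v =>
  rw [hσ, hΦ, hΦ, hh, hh, norm_aux, quatConj_mul_aux]
  congr 1
  have e : quatConj F y * q2 F * ((q2 F)⁻¹ * quatConj F c * q2 F * v) =
      quatConj F y * (q2 F * (q2 F)⁻¹) * quatConj F c * q2 F * v := by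
    simp only [mul_assoc]
  rw [e, q2_mul_inv_aux, mul_one]
end
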